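/- For a square real matrix A with ‖A‖ < 1, integers m ≥ 0 and τ ≥ 1 with m ≤ τ, the shifted falling-factorial series satisfies ∑_{t=τ}^{∞} t^{\underline{m}} A^{t-τ} = ∑_{r=0}^{m} C(m,r) · τ^{\underline{m-r}} · r! · A^{r} (I - A)^{-(r+1)}, where C(m,r) is the binomial coefficient. -/

import Mathlib

/-!
Two facts carry the proof. Multiplying Vandermonde's identity by `m!` gives the binomial expansion
of the falling factorial, `(t + τ)^{\underline m} = ∑ r ≤ m, C(m,r) τ^{\underline{m-r}}
t^{\underline r}`. On the other hand, the negative binomial series `∑ C(n+r,r) A^n = (1 - A)^{-(r+1)}`,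
multiplied by `r! A^r` and reindexed by `t = n + r`, becomes
`∑ t^{\underline r} A^t = r! A^r (1 - A)^{-(r+1)}`, the terms with `t < r` being zero. Summing the
second over `r` with the coefficients of the first yields the claim.
-/

open Matrix

attribute [local instance] Matrix.linftyOpNormedRing Matrix.linftyOpNormedAlgebra

/-- Vandermonde's identity for falling factorials. -/
lemma add_descFactorial_eq_sum (t τ m : ℕ) :
    (t + τ).descFactorial m = ∑ r ∈ Finset.range (m + 1),
      m.choose r * τ.descFactorial (m - r) * t.descFactorial r := by
  rw [Nat.descFactorial_eq_factorial_mul_choose, Nat.add_choose_eq,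
    Finset.Nat.sum_antidiagonal_eq_sum_range_succ_mk, Finset.mul_sum]
  refine Finset.sum_congr rfl fun r hr => ?_
  have h : r ≤ m := Nat.lt_succ_iff.mp (Finset.mem_range.mp hr)
  rw [Nat.descFactorial_eq_factorial_mul_choose τ, Nat.descFactorial_eq_factorial_mul_choose t,
    ← Nat.choose_mul_factorial_mul_factorial h]
  ring

lemma hasSum_descFactorial_smul_pow {K : ℕ} (A : Matrix (Fin K) (Fin K) ℝ) (hA : ‖A‖ < 1)
    (r : ℕ) :
    HasSum (fun t : ℕ => (t.descFactorial r : ℝ) • A ^ t)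
      ((r.factorial : ℝ) • (A ^ r * (1 - A)⁻¹ ^ (r + 1))) := by
  have h := ((hasSum_choose_mul_geometric_of_norm_lt_one' r hA).mul_left (A ^ r)).const_smul
    (r.factorial : ℝ)
  rw [← Matrix.nonsing_inv_eq_ringInverse] at h
  refine ((add_left_injective r).hasSum_iff fun t ht => ?_).mp (h.congr_fun ?_)
  · have htr : t < r := by
      by_contra! hle
      exact ht ⟨t - r, Nat.sub_add_cancel hle⟩
    simp [Nat.descFactorial_of_lt htr]
  · intro n
    simp only [Function.comp_apply]
    rw [Nat.descFactorial_eq_factorial_mul_choose, Nat.cast_mul, mul_smul, ← nsmul_eq_mul,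
      mul_smul_comm, ← pow_add, Nat.cast_smul_eq_nsmul ℝ ((n + r).choose r), add_comm n r]

/-- Shifted falling-factorial matrix series: for ‖A‖ < 1, 1 ≤ τ and m ≤ τ,
∑_{t=τ}^{∞} t^{\underline m} A^{t-τ}
  = ∑_{r=0}^{m} C(m,r) τ^{\underline{m-r}} r! A^r (I - A)^{-(r+1)}. -/
theorem shifted_falling_factorial_matrix_series {K : ℕ}
    (A : Matrix (Fin K) (Fin K) ℝ) (hA : ‖A‖ < 1)
    (m τ : ℕ) (hτ : 1 ≤ τ) (hmτ : m ≤ τ) :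
    HasSum (fun t : ℕ => (((t + τ).descFactorial m : ℕ) : ℝ) • A ^ t)
      (∑ r ∈ Finset.range (m + 1),
        ((m.choose r : ℝ) * (τ.descFactorial (m - r) : ℝ) * (r.factorial : ℝ)) •
          (A ^ r * (1 - A)⁻¹ ^ (r + 1))) := by
  have h := hasSum_sum fun r (_ : r ∈ Finset.range (m + 1)) =>
    (hasSum_descFactorial_smul_pow A hA r).const_smul
      ((m.choose r : ℝ) * (τ.descFactorial (m - r) : ℝ))
  simp only [smul_smul, ← Finset.sum_smul] at h
  simpa [add_descFactorial_eq_sum] using h
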